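/- Let D > 0, let F : [0, D) → ℝ be C³ with F(0) = 0, F'(0) = 0, and F'(t), F''(t), F'''(t), and (F(t)/t)' all nonnegative on (0, D), and let r : ℂ² → ℝ be convex and Fréchet-differentiable. Define ρ(z) = F(x₁²) + r(z) for z = (z₁,z₂) with z₁ = x₁ + i y₁ and x₁² < D, and fix d with d² < D. Write ζ₁ = ξ₁ + i η₁ and z₁ = x₁ + i y₁. Then for each k ∈ {1, 2} there is a constant c > 0 such that: for all ζ, z ∈ ℂ² with |ξ₁| ≤ d, |x₁| ≤ d, ρ(ζ) − ρ(z) ≥ 0, and |ξ₁| ≤ |x₁ − ξ₁|, one has |Φ(ζ,z)|^k · |z − ζ| ≥ c·( ( |Im Φ(ζ,z)| + ρ(ζ) − ρ(z) + F(ξ₁²/2) )^k · ( |ξ₁| + |y₁ − η₁| ) + ( |Im Φ(ζ,z)| + ρ(ζ) − ρ(z) + F(x₁²/2) )^k · ( |x₁| + |y₁ − η₁| ) ). -/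

import Mathlib

open Complex Set

/-- The Wirtinger derivative `∂g/∂z₁` of a real-valued function `g` on `ℂ²`. -/
noncomputable def wirt1 (g : ℂ × ℂ → ℝ) (ζ : ℂ × ℂ) : ℂ :=
  (1 / 2 : ℂ) * (((fderiv ℝ g ζ) (1, 0) : ℝ) - Complex.I * ((fderiv ℝ g ζ) (Complex.I, 0) : ℝ))

/-- The Wirtinger derivative `∂g/∂z₂`. -/
noncomputable def wirt2 (g : ℂ × ℂ → ℝ) (ζ : ℂ × ℂ) : ℂ :=
  (1 / 2 : ℂ) * (((fderiv ℝ g ζ) (0, 1) : ℝ) - Complex.I * ((fderiv ℝ g ζ) (0, Complex.I) : ℝ))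

/-- The support function `Φ(ζ,z) = Σ_{j=1}^{2} (∂g/∂ζ_j)(ζ)·(ζ_j − z_j)`. -/
noncomputable def suppFn (g : ℂ × ℂ → ℝ) (ζ z : ℂ × ℂ) : ℂ :=
  wirt1 g ζ * (ζ.1 - z.1) + wirt2 g ζ * (ζ.2 - z.2)

/-- The Euclidean norm on `ℂ²`. -/
noncomputable def eNorm (w : ℂ × ℂ) : ℝ :=
  Real.sqrt (‖w.1‖ ^ 2 + ‖w.2‖ ^ 2)

/-!
Convexity of `r` reduces `2 Re Φ(ζ, z)` to a remainder in one real variable: it is at least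
`ρ(ζ) - ρ(z) + R`, where `R` is the first-order Taylor remainder at `ξ₁` of `t ↦ F(t²)`, taken at
`x₁`. The tangent inequality for `F` at `ξ₁²` gives `F'(ξ₁²) (x₁ - ξ₁)² ≤ R`, and also
`F(ξ₁²) ≤ ξ₁² F'(ξ₁²)` because `F(0) = 0`. Since `F' ≥ 0`, it follows for `|ξ₁| ≤ |x₁ - ξ₁|` that
`R` controls both `F(ξ₁²)` and `F(x₁²)`, hence so does `|Φ|`. The remaining factors are controlled
by `|z - ζ|`.
-/

/-- The domain `{z ∈ ℂ² : x₁² < D}` of the function `ρ(z) = F(x₁²) + r(z)`. -/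
def reStrip (D : ℝ) : Set (ℂ × ℂ) :=
  {z | z.1.re ^ 2 < D}

/-- The first-order Taylor remainder at `ξ` of the function `t ↦ F (t ^ 2)`, taken at `x`; it is
what `F` contributes to the lower bound for `2 Re Φ`. The number `m` stands for the derivative of
`F` at `ξ ^ 2`, which for `ξ = 0` is only one-sided. -/
def sqRemainder (F : ℝ → ℝ) (m ξ x : ℝ) : ℝ :=
  F (x ^ 2) - (F (ξ ^ 2) + m * (2 * ξ * (x - ξ)))

section Convex

variable {S : Set ℝ} {f f' f'' : ℝ → ℝ}

lemma monotoneOn_of_hasDerivWithinAt_nonneg_interior (hS : Convex ℝ S)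
    (hf : ∀ t ∈ S, HasDerivWithinAt f (f' t) S t) (hf' : ∀ t ∈ interior S, 0 ≤ f' t) :
    MonotoneOn f S :=
  monotoneOn_of_hasDerivWithinAt_nonneg hS (fun t ht ↦ (hf t ht).continuousWithinAt)
    (fun t ht ↦ (hf t (interior_subset ht)).mono interior_subset) hf'

lemma convexOn_of_hasDerivWithinAt2_nonneg_interior (hS : Convex ℝ S)
    (hf : ∀ t ∈ S, HasDerivWithinAt f (f' t) S t) (hf' : ∀ t ∈ S, HasDerivWithinAt f' (f'' t) S t)
    (hf'' : ∀ t ∈ interior S, 0 ≤ f'' t) : ConvexOn ℝ S f :=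
  convexOn_of_hasDerivWithinAt2_nonneg hS (fun t ht ↦ (hf t ht).continuousWithinAt)
    (fun t ht ↦ (hf t (interior_subset ht)).mono interior_subset)
    (fun t ht ↦ (hf' t (interior_subset ht)).mono interior_subset) hf''

lemma add_apply_sub_le_of_convexOn {E : Type*} [NormedAddCommGroup E] [NormedSpace ℝ E]
    {s : Set E} {g : E → ℝ} {g' : E →L[ℝ] ℝ} {x y : E} (hg : ConvexOn ℝ s g)
    (hx : x ∈ s) (hy : y ∈ s) (hg' : HasFDerivWithinAt g g' s x) : g x + g' (y - x) ≤ g y := by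
  let γ : ℝ →ᵃ[ℝ] E := AffineMap.lineMap x y
  have hγ0 : γ 0 = x := AffineMap.lineMap_apply_zero x y
  have hγ1 : γ 1 = y := AffineMap.lineMap_apply_one x y
  have hderiv : HasDerivWithinAt (g ∘ γ) (g' (y - x)) (γ ⁻¹' s) 0 :=
    HasFDerivWithinAt.comp_hasDerivWithinAt 0 (hγ0.symm ▸ hg')
      AffineMap.hasDerivWithinAt_lineMap (mapsTo_preimage γ s)
  have hslope : g' (y - x) ≤ slope (g ∘ γ) 0 1 :=
    (hg.comp_affineMap γ).le_slope_of_hasDerivWithinAt (by simpa [hγ0] using hx)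
      (by simpa [hγ1] using hy) zero_lt_one hderiv
  rw [slope_def_field, Function.comp_apply, Function.comp_apply, hγ0, hγ1] at hslope
  linarith

lemma add_mul_sub_le_of_convexOn {m s t : ℝ} (hf : ConvexOn ℝ S f) (hs : s ∈ S) (ht : t ∈ S)
    (hm : HasDerivWithinAt f m S s) : f s + m * (t - s) ≤ f t := by
  simpa [mul_comm] using add_apply_sub_le_of_convexOn hf hs ht hm.hasFDerivWithinAt

lemma le_mul_of_convexOn_of_map_zero {m t : ℝ} (hf : ConvexOn ℝ S f) (h0 : 0 ∈ S) (hf0 : f 0 = 0)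
    (ht : t ∈ S) (hm : HasDerivWithinAt f m S t) : f t ≤ m * t := by
  linarith [add_mul_sub_le_of_convexOn hf ht h0 hm]

end Convex

section SqRemainder

variable {D : ℝ} {F : ℝ → ℝ} {m ξ x : ℝ}

lemma mul_sq_sub_le_sqRemainder (hF : ConvexOn ℝ (Ico 0 D) F) (hξ : ξ ^ 2 < D) (hx : x ^ 2 < D)
    (hm : HasDerivWithinAt F m (Ico 0 D) (ξ ^ 2)) : m * (x - ξ) ^ 2 ≤ sqRemainder F m ξ x := by
  have htangent : F (ξ ^ 2) + m * (x ^ 2 - ξ ^ 2) ≤ F (x ^ 2) :=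
    add_mul_sub_le_of_convexOn hF ⟨sq_nonneg ξ, hξ⟩ ⟨sq_nonneg x, hx⟩ hm
  unfold sqRemainder
  linarith

lemma apply_sq_le_sqRemainder (hF : ConvexOn ℝ (Ico 0 D) F) (hF0 : F 0 = 0) (hξ : ξ ^ 2 < D)
    (hx : x ^ 2 < D) (hm : HasDerivWithinAt F m (Ico 0 D) (ξ ^ 2)) (hm0 : 0 ≤ m)
    (hle : |ξ| ≤ |x - ξ|) : F (ξ ^ 2) ≤ sqRemainder F m ξ x :=
  calc
    F (ξ ^ 2) ≤ m * ξ ^ 2 :=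
      le_mul_of_convexOn_of_map_zero hF ⟨le_rfl, (sq_nonneg ξ).trans_lt hξ⟩ hF0
        ⟨sq_nonneg ξ, hξ⟩ hm
    _ ≤ m * (x - ξ) ^ 2 := mul_le_mul_of_nonneg_left (sq_le_sq.2 hle) hm0
    _ ≤ sqRemainder F m ξ x := mul_sq_sub_le_sqRemainder hF hξ hx hm

lemma apply_sq_le_four_mul_sqRemainder (hF : ConvexOn ℝ (Ico 0 D) F) (hF0 : F 0 = 0)
    (hξ : ξ ^ 2 < D) (hx : x ^ 2 < D) (hm : HasDerivWithinAt F m (Ico 0 D) (ξ ^ 2)) (hm0 : 0 ≤ m)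
    (hle : |ξ| ≤ |x - ξ|) : F (x ^ 2) ≤ 4 * sqRemainder F m ξ x := by
  have habs : |x| ≤ |2 * (x - ξ)| := by
    rw [abs_mul, abs_two]
    linarith [abs_sub_abs_le_abs_sub x ξ]
  have hsq : m * x ^ 2 ≤ m * (2 * (x - ξ)) ^ 2 :=
    mul_le_mul_of_nonneg_left (sq_le_sq.2 habs) hm0
  have hFξ : F (ξ ^ 2) ≤ m * ξ ^ 2 :=
    le_mul_of_convexOn_of_map_zero hF ⟨le_rfl, (sq_nonneg ξ).trans_lt hξ⟩ hF0 ⟨sq_nonneg ξ, hξ⟩ hm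
  calc
    F (x ^ 2) = sqRemainder F m ξ x + F (ξ ^ 2) + m * (2 * ξ * (x - ξ)) := by
      unfold sqRemainder
      ring
    _ ≤ sqRemainder F m ξ x + 3 * (m * (x - ξ) ^ 2) := by linarith
    _ ≤ 4 * sqRemainder F m ξ x := by linarith [mul_sq_sub_le_sqRemainder hF hξ hx hm]

end SqRemainder

lemma hasFDerivAt_comp_sq {E : Type*} [NormedAddCommGroup E] [NormedSpace ℝ E] {D m : ℝ}
    {F : ℝ → ℝ} (L : E →L[ℝ] ℝ) {w : E} (hw : L w ^ 2 < D)
    (hm : HasDerivWithinAt F m (Ico 0 D) (L w ^ 2)) :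
    HasFDerivAt (fun v ↦ F (L v ^ 2)) (m • (2 * L w) • L) w := by
  have hsq : HasFDerivAt (fun v ↦ L v ^ 2) ((2 * L w) • L) w := by
    simpa using L.hasFDerivAt.pow 2
  exact hm.comp_hasFDerivAt w hsq <|
    (hsq.continuousAt.eventually_lt_const hw).mono fun v hv ↦
      (⟨sq_nonneg (L v), hv⟩ : L v ^ 2 ∈ Ico 0 D)

lemma isOpen_reStrip (D : ℝ) : IsOpen (reStrip D) :=
  isOpen_lt (by fun_prop) continuous_const

lemma convex_reStrip (D : ℝ) : Convex ℝ (reStrip D) := by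
  simpa [reStrip] using ((even_two.convexOn_pow (𝕜 := ℝ)).comp_linearMap
    (reLm ∘ₗ LinearMap.fst ℝ ℂ ℂ)).convex_lt D

lemma two_mul_re_suppFn (g : ℂ × ℂ → ℝ) (ζ z : ℂ × ℂ) :
    2 * (suppFn g ζ z).re = fderiv ℝ g ζ (ζ - z) := by
  have hbasis (w : ℂ × ℂ) : w = w.1.re • ((1, 0) : ℂ × ℂ) + w.1.im • ((I, 0) : ℂ × ℂ)
      + w.2.re • ((0, 1) : ℂ × ℂ) + w.2.im • ((0, I) : ℂ × ℂ) := by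
    ext <;> simp
  rw [hbasis (ζ - z)]
  simp only [map_add, map_smul]
  simp [suppFn, wirt1, wirt2]
  ring

lemma abs_re_fst_le_eNorm (w : ℂ × ℂ) : |w.1.re| ≤ eNorm w :=
  (abs_re_le_norm w.1).trans (Real.le_sqrt_of_sq_le (le_add_of_nonneg_right (sq_nonneg _)))

lemma abs_im_fst_le_eNorm (w : ℂ × ℂ) : |w.1.im| ≤ eNorm w :=
  (abs_im_le_norm w.1).trans (Real.le_sqrt_of_sq_le (le_add_of_nonneg_right (sq_nonneg _)))

section SupportFunction

variable {D m : ℝ} {F : ℝ → ℝ} {r ρ : ℂ × ℂ → ℝ} {ζ z : ℂ × ℂ}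

lemma fderiv_add_comp_re_sq_apply (hρ : EqOn ρ (fun w ↦ F (w.1.re ^ 2) + r w) (reStrip D))
    (hr : DifferentiableAt ℝ r ζ) (hζ : ζ ∈ reStrip D)
    (hm : HasDerivWithinAt F m (Ico 0 D) (ζ.1.re ^ 2)) (v : ℂ × ℂ) :
    fderiv ℝ ρ ζ v = m * (2 * ζ.1.re * v.1.re) + fderiv ℝ r ζ v := by
  let L : ℂ × ℂ →L[ℝ] ℝ := reCLM ∘L ContinuousLinearMap.fst ℝ ℂ ℂ
  have hderiv : HasFDerivAt ρ (m • (2 * L ζ) • L + fderiv ℝ r ζ) ζ :=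
    ((hasFDerivAt_comp_sq L hζ hm).add hr.hasFDerivAt).congr_of_eventuallyEq
      (hρ.eventuallyEq_of_mem ((isOpen_reStrip D).mem_nhds hζ))
  simp [hderiv.fderiv, L]

lemma sub_add_sqRemainder_le_two_mul_re_suppFn
    (hρ : EqOn ρ (fun w ↦ F (w.1.re ^ 2) + r w) (reStrip D)) (hr : ConvexOn ℝ (reStrip D) r)
    (hr' : DifferentiableAt ℝ r ζ) (hζ : ζ ∈ reStrip D) (hz : z ∈ reStrip D)
    (hm : HasDerivWithinAt F m (Ico 0 D) (ζ.1.re ^ 2)) :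
    ρ ζ - ρ z + sqRemainder F m ζ.1.re z.1.re ≤ 2 * (suppFn ρ ζ z).re := by
  have htangent : r ζ - r z ≤ fderiv ℝ r ζ (ζ - z) := by
    have := add_apply_sub_le_of_convexOn hr hζ hz hr'.hasFDerivAt.hasFDerivWithinAt
    rw [← neg_sub ζ z, map_neg] at this
    linarith
  rw [two_mul_re_suppFn, fderiv_add_comp_re_sq_apply hρ hr' hζ hm, hρ hζ, hρ hz]
  simp only [sqRemainder, Prod.fst_sub, sub_re]
  linarith

lemma abs_im_suppFn_add_le_nine_mul_norm (hF : ConvexOn ℝ (Ico 0 D) F)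
    (hFmono : MonotoneOn F (Ico 0 D)) (hFdiff : DifferentiableOn ℝ F (Ico 0 D)) (hF0 : F 0 = 0)
    (hρ : EqOn ρ (fun w ↦ F (w.1.re ^ 2) + r w) (reStrip D)) (hr : ConvexOn ℝ (reStrip D) r)
    (hr' : DifferentiableAt ℝ r ζ) (hζ : ζ ∈ reStrip D) (hz : z ∈ reStrip D)
    (hle : |ζ.1.re| ≤ |z.1.re - ζ.1.re|) (hρle : 0 ≤ ρ ζ - ρ z) :
    |(suppFn ρ ζ z).im| + ρ ζ - ρ z + F (ζ.1.re ^ 2) ≤ 9 * ‖suppFn ρ ζ z‖ ∧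
      |(suppFn ρ ζ z).im| + ρ ζ - ρ z + F (z.1.re ^ 2) ≤ 9 * ‖suppFn ρ ζ z‖ := by
  have hm := (hFdiff (ζ.1.re ^ 2) ⟨sq_nonneg _, hζ⟩).hasDerivWithinAt
  have hm0 := hFmono.derivWithin_nonneg (x := ζ.1.re ^ 2)
  have hξ := apply_sq_le_sqRemainder hF hF0 hζ hz hm hm0 hle
  have hx := apply_sq_le_four_mul_sqRemainder hF hF0 hζ hz hm hm0 hle
  have hre := sub_add_sqRemainder_le_two_mul_re_suppFn hρ hr hr' hζ hz hm
  have hre_norm := re_le_norm (suppFn ρ ζ z)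
  have him_norm := abs_im_le_norm (suppFn ρ ζ z)
  have hnorm := norm_nonneg (suppFn ρ ζ z)
  constructor <;> linarith

end SupportFunction

theorem stmt8_general {D : ℝ} {F : ℝ → ℝ} (hF : ConvexOn ℝ (Ico 0 D) F)
    (hFmono : MonotoneOn F (Ico 0 D)) (hFdiff : DifferentiableOn ℝ F (Ico 0 D)) (hF0 : F 0 = 0)
    {r ρ : ℂ × ℂ → ℝ} (hρ : EqOn ρ (fun w ↦ F (w.1.re ^ 2) + r w) (reStrip D))
    (hr : ConvexOn ℝ (reStrip D) r) {ζ z : ℂ × ℂ} (hr' : DifferentiableAt ℝ r ζ)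
    (hζ : ζ ∈ reStrip D) (hz : z ∈ reStrip D) (hρle : 0 ≤ ρ ζ - ρ z)
    (hle : |ζ.1.re| ≤ |z.1.re - ζ.1.re|) (k : ℕ) :
    (|(suppFn ρ ζ z).im| + ρ ζ - ρ z + F (ζ.1.re ^ 2 / 2)) ^ k *
          (|ζ.1.re| + |z.1.im - ζ.1.im|) +
        (|(suppFn ρ ζ z).im| + ρ ζ - ρ z + F (z.1.re ^ 2 / 2)) ^ k *
          (|z.1.re| + |z.1.im - ζ.1.im|) ≤
      5 * 9 ^ k * (‖suppFn ρ ζ z‖ ^ k * eNorm (z - ζ)) := by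
  have hhalf (x : ℝ) (hx : x ^ 2 < D) : 0 ≤ F (x ^ 2 / 2) ∧ F (x ^ 2 / 2) ≤ F (x ^ 2) := by
    have hsq := sq_nonneg x
    have hmem : x ^ 2 / 2 ∈ Ico 0 D := ⟨by positivity, by linarith⟩
    have h0 : (0 : ℝ) ∈ Ico 0 D := ⟨le_rfl, hsq.trans_lt hx⟩
    exact ⟨hF0 ▸ hFmono h0 hmem hmem.1, hFmono hmem ⟨hsq, hx⟩ (by linarith)⟩
  obtain ⟨hξ_nonneg, hξ_le⟩ := hhalf ζ.1.re hζ
  obtain ⟨hx_nonneg, hx_le⟩ := hhalf z.1.re hz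
  obtain ⟨hξ_bound, hx_bound⟩ :=
    abs_im_suppFn_add_le_nine_mul_norm hF hFmono hFdiff hF0 hρ hr hr' hζ hz hle hρle
  have hre : |z.1.re - ζ.1.re| ≤ eNorm (z - ζ) := abs_re_fst_le_eNorm (z - ζ)
  have him : |z.1.im - ζ.1.im| ≤ eNorm (z - ζ) := abs_im_fst_le_eNorm (z - ζ)
  have htri : |z.1.re| - |ζ.1.re| ≤ |z.1.re - ζ.1.re| := abs_sub_abs_le_abs_sub _ _
  have him_nonneg := abs_nonneg (suppFn ρ ζ z).im
  calc
    _ ≤ (9 * ‖suppFn ρ ζ z‖) ^ k * (2 * eNorm (z - ζ)) +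
        (9 * ‖suppFn ρ ζ z‖) ^ k * (3 * eNorm (z - ζ)) := by
      gcongr <;> linarith
    _ = 5 * 9 ^ k * (‖suppFn ρ ζ z‖ ^ k * eNorm (z - ζ)) := by ring

/-- Lemma 2.3, second case: lower bound for the support function of
`ρ(z) = F(x₁²) + r(z)` (real case) when `|ξ₁| ≤ |x₁ − ξ₁|`. -/
theorem stmt8 (D : ℝ) (hD : 0 < D) (F F' F'' F''' : ℝ → ℝ)
    (hF : ContDiffOn ℝ 3 F (Set.Ico 0 D))
    (hF' : ∀ t ∈ Set.Ico 0 D, HasDerivWithinAt F (F' t) (Set.Ico 0 D) t)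
    (hF'' : ∀ t ∈ Set.Ico 0 D, HasDerivWithinAt F' (F'' t) (Set.Ico 0 D) t)
    (hF''' : ∀ t ∈ Set.Ico 0 D, HasDerivWithinAt F'' (F''' t) (Set.Ico 0 D) t)
    (hF0 : F 0 = 0) (hF'0 : F' 0 = 0)
    (hF'pos : ∀ t ∈ Set.Ioo 0 D, 0 ≤ F' t)
    (hF''pos : ∀ t ∈ Set.Ioo 0 D, 0 ≤ F'' t)
    (hF'''pos : ∀ t ∈ Set.Ioo 0 D, 0 ≤ F''' t)
    (hquot : ∀ t ∈ Set.Ioo 0 D, 0 ≤ deriv (fun s => F s / s) t)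
    (r : ℂ × ℂ → ℝ) (hconv : ConvexOn ℝ Set.univ r) (hdiff : Differentiable ℝ r)
    (ρ : ℂ × ℂ → ℝ)
    (hρ : ∀ z : ℂ × ℂ, (z.1.re) ^ 2 < D → ρ z = F ((z.1.re) ^ 2) + r z)
    (d : ℝ) (hd : d ^ 2 < D) (k : ℕ) (hk : k = 1 ∨ k = 2) :
    ∃ c > (0 : ℝ), ∀ ζ z : ℂ × ℂ,
      |ζ.1.re| ≤ d → |z.1.re| ≤ d → 0 ≤ ρ ζ - ρ z →
      |ζ.1.re| ≤ |z.1.re - ζ.1.re| →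
      ‖suppFn ρ ζ z‖ ^ k * eNorm (z - ζ) ≥
        c * ((|(suppFn ρ ζ z).im| + ρ ζ - ρ z + F ((ζ.1.re) ^ 2 / 2)) ^ k *
              (|ζ.1.re| + |z.1.im - ζ.1.im|) +
            (|(suppFn ρ ζ z).im| + ρ ζ - ρ z + F ((z.1.re) ^ 2 / 2)) ^ k *
              (|z.1.re| + |z.1.im - ζ.1.im|)) := by
  have hstrip {w : ℂ × ℂ} (hw : |w.1.re| ≤ d) : w ∈ reStrip D :=
    (sq_le_sq.2 (hw.trans (le_abs_self d))).trans_lt hd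
  have hFconv : ConvexOn ℝ (Ico 0 D) F := convexOn_of_hasDerivWithinAt2_nonneg_interior
    (convex_Ico 0 D) hF' hF'' (interior_Ico (a := (0 : ℝ)) ▸ hF''pos)
  have hFmono : MonotoneOn F (Ico 0 D) := monotoneOn_of_hasDerivWithinAt_nonneg_interior
    (convex_Ico 0 D) hF' (interior_Ico (a := (0 : ℝ)) ▸ hF'pos)
  refine ⟨(5 * 9 ^ k)⁻¹, by positivity, fun ζ z hζ hz hρle hle ↦ ?_⟩
  exact (inv_mul_le_iff₀ (by positivity)).2 <| stmt8_general hFconv hFmono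
    (hF.differentiableOn (by norm_num)) hF0 hρ (hconv.subset (subset_univ _) (convex_reStrip D))
    (hdiff ζ) (hstrip hζ) (hstrip hz) hρle hle k
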